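/- Let p = p(n) ∈ [0,1] satisfy 3 log n/(4n) ≤ p(n) for all sufficiently large n, and p(n) → 0 as n → ∞. Then asymptotically almost surely, every orientation of the binomial random graph G(n,p) contains a Sullivan vertex. -/

import Mathlib

open Filter

/-- The outneighbourhood `N1(v)` of `v` in the digraph with arc relation `D`. -/
def outNbr {V : Type*} (D : V → V → Prop) (v : V) : Set V := {w | w ≠ v ∧ D v w}

/-- The inneighbourhood `N⁻(v)` of `v`. -/
def inNbr {V : Type*} (D : V → V → Prop) (v : V) : Set V := {w | w ≠ v ∧ D w v}

/-- The second outneighbourhood `N2(v)` of `v`. -/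
def outNbr2 {V : Type*} (D : V → V → Prop) (v : V) : Set V :=
  {w | w ∉ insert v (outNbr D v) ∧ ∃ u ∈ outNbr D v, D u w}

/-- `v` is a Seymour vertex: `|N2(v)| ≥ |N1(v)|`. -/
def SeymourVertex {V : Type*} (D : V → V → Prop) (v : V) : Prop :=
  (outNbr D v).ncard ≤ (outNbr2 D v).ncard

/-- `v` is a Sullivan vertex: `|N2(v)| ≥ |N⁻(v)|`. -/
def SullivanVertex {V : Type*} (D : V → V → Prop) (v : V) : Prop :=
  (inNbr D v).ncard ≤ (outNbr2 D v).ncard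

/-- An oriented graph: an asymmetric (hence irreflexive and loopless) arc relation. -/
def OrientedGraph {V : Type*} (D : V → V → Prop) : Prop := ∀ u v, D u v → ¬ D v u

/-- `D` is an orientation of the simple graph `G`. -/
def Orients {V : Type*} (D : V → V → Prop) (G : SimpleGraph V) : Prop :=
  OrientedGraph D ∧ ∀ u v, G.Adj u v ↔ (D u v ∨ D v u)

/-- Strong connectivity of a digraph: every vertex reaches every other by a directed path. -/
def StrongConn {V : Type*} (D : V → V → Prop) : Prop := ∀ u v, Relation.ReflTransGen D u v

/-- The number of edges of `G` with one endpoint in `A` and the other in `B`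
(counted via ordered pairs; equals `e(A,B)` for disjoint `A`, `B`). -/
noncomputable def eBtw {V : Type*} (G : SimpleGraph V) (A B : Set V) : ℕ :=
  {p : V × V | p.1 ∈ A ∧ p.2 ∈ B ∧ G.Adj p.1 p.2}.ncard

/-- The number of edges of `G` with both endpoints in `A`. -/
noncomputable def eIn {V : Type*} (G : SimpleGraph V) (A : Set V) : ℕ :=
  {e | e ∈ G.edgeSet ∧ ∀ v ∈ e, v ∈ A}.ncard

open scoped Classical in
/-- The probability that the binomial random graph `G(n,p)` satisfies the property `P`. -/
noncomputable def gnpProb (n : ℕ) (p : ℝ) (P : SimpleGraph (Fin n) → Prop) : ℝ :=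
  ∑ G : SimpleGraph (Fin n),
    if P G then p ^ G.edgeSet.ncard * (1 - p) ^ (n.choose 2 - G.edgeSet.ncard) else 0

/-
Suppose that no vertex of an orientation of `G` is a Sullivan vertex. For every `v`, the union of
the first two outneighbourhoods is then smaller than the degree of `v`, and all directed walks of
length two from `v` end in arcs inside this small set; so there are few of them if small sets span
few edges. Counted by their middle vertex instead, directed walks of length two number
`∑ |N⁻(u)| |N1(u)|`, which is large if all large sets span many edges: few vertices can then have
small outdegree, or small indegree. Chernoff bounds show that `G(n,p)` has both properties with
probability at least `1 - 3 exp (-np)` once `np` is at least a constant multiple of `log n` and `p`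
is small.
-/

section Orientations

open Finset

variable {V : Type*} {D : V → V → Prop} {G : SimpleGraph V}

lemma OrientedGraph.ne (hD : OrientedGraph D) {u v : V} (h : D u v) : u ≠ v := by
  rintro rfl
  exact hD u u h h

lemma OrientedGraph.mem_outNbr (hD : OrientedGraph D) {v w : V} : w ∈ outNbr D v ↔ D v w :=
  ⟨And.right, fun h => ⟨(hD.ne h).symm, h⟩⟩

lemma OrientedGraph.outNbr_subset_of_mem_outNbr (hD : OrientedGraph D) {u v : V}
    (hu : u ∈ outNbr D v) : outNbr D u ⊆ outNbr D v ∪ outNbr2 D v := by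
  intro w hw
  by_cases hvw : w ∈ outNbr D v
  · exact .inl hvw
  · have hwv : w ≠ v := by
      rintro rfl
      exact hD _ _ hu.2 hw.2
    exact .inr ⟨by simp [hwv, hvw], u, hu, hw.2⟩

lemma Orients.flip (hD : Orients D G) : Orients (flip D) G :=
  ⟨fun u v => hD.1 v u, fun u v => (hD.2 u v).trans or_comm⟩

lemma Orients.ncard_outNbr_add_ncard_inNbr [Finite V] (hD : Orients D G) (v : V) :
    (outNbr D v).ncard + (inNbr D v).ncard = (G.neighborSet v).ncard := by
  have hdisj : Disjoint (outNbr D v) (inNbr D v) :=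
    Set.disjoint_left.2 fun w hout hin => hD.1 v w hout.2 hin.2
  rw [← Set.ncard_union_eq hdisj]
  congr 1
  ext w
  exact (or_congr hD.1.mem_outNbr hD.flip.1.mem_outNbr).trans (hD.2 v w).symm

lemma Orients.sum_ncard_outNbr_inter (hD : Orients D G) (S : Finset V) :
    ∑ u ∈ S, (outNbr D u ∩ S).ncard = eIn G S := by
  classical
  have hout (u : V) : (outNbr D u ∩ S).ncard = #{w ∈ S | D u w} := by
    rw [← Set.ncard_coe_finset]
    congr 1
    ext w
    simp [hD.1.mem_outNbr, and_comm]
  have hinj : Set.InjOn (fun q : (_ : V) × V => s(q.1, q.2))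
      (S.sigma fun u => {w ∈ S | D u w}) := by
    rintro ⟨a, b⟩ hab ⟨c, d⟩ hcd h
    simp only [coe_sigma, coe_filter, Set.mem_sigma_iff, Set.mem_ofPred_eq] at hab hcd
    rcases Sym2.eq_iff.1 h with ⟨rfl, rfl⟩ | ⟨rfl, rfl⟩
    · rfl
    · exact absurd hcd.2.2 (hD.1 _ _ hab.2.2)
  simp only [hout]
  rw [← card_sigma, ← Set.ncard_coe_finset, ← hinj.ncard_image, eIn]
  congr 1
  ext e
  induction e with | _ a b
  simp only [coe_sigma, coe_filter, Set.mem_image, Set.mem_sigma_iff, Set.mem_ofPred_eq,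
    Sigma.exists, SimpleGraph.mem_edgeSet, hD.2, Sym2.mem_iff, Sym2.eq_iff]
  grind

lemma sum_sum_outNbr [Fintype V] [∀ v, Fintype (outNbr D v)] (f : V → ℕ) :
    ∑ v, ∑ u ∈ (outNbr D v).toFinset, f u = ∑ u, (inNbr D u).ncard * f u := by
  classical
  rw [sum_comm' (t' := univ) (s' := fun u => (inNbr D u).toFinset)]
  · simp [Set.ncard_eq_toFinset_card']
  · intro v u
    rw [Set.mem_toFinset, Set.mem_toFinset]
    simp [outNbr, inNbr, eq_comm]

lemma Orients.card_filter_ncard_outNbr_lt [Fintype V] (hD : Orients D G) {m : ℕ} {d : ℝ}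
    (hm : ∀ S : Finset V, #S = m → d * m < eIn G S) :
    #{v | (outNbr D v).ncard < d} < m := by
  by_contra! hcard
  obtain ⟨S, hSlow, rfl⟩ := exists_subset_card_eq hcard
  refine (hm S rfl).not_ge ?_
  calc (eIn G S : ℝ) = ∑ u ∈ S, ((outNbr D u ∩ S).ncard : ℝ) := by
        exact_mod_cast (hD.sum_ncard_outNbr_inter S).symm
    _ ≤ ∑ _u ∈ S, d := by
        refine sum_le_sum fun _ hu => le_trans ?_ (mem_filter.1 (hSlow hu)).2.le
        exact_mod_cast Set.ncard_le_ncard Set.inter_subset_left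
    _ = d * #S := by rw [sum_const, nsmul_eq_mul, mul_comm]

/-- The edge-density conditions which force every orientation to have a Sullivan vertex: degrees
are at most `s`, sets of `s` vertices span few edges, and sets of `m` vertices span many. -/
structure IsSpread (G : SimpleGraph V) (m s : ℕ) (d : ℝ) : Prop where
  ncard_neighborSet_le (v : V) : (G.neighborSet v).ncard ≤ s
  eIn_lt (S : Finset V) : #S = s → eIn G S < d ^ 2 / 2
  lt_eIn (S : Finset V) : #S = m → d * m < eIn G S

lemma Orients.sum_ncard_outNbr_lt_of_not_sullivanVertex [Fintype V] {m s : ℕ} {d : ℝ}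
    (hD : Orients D G) (hG : IsSpread G m s d) (hs : s ≤ Fintype.card V) {v : V}
    [Fintype (outNbr D v)] (hv : ¬ SullivanVertex D v) :
    ∑ u ∈ (outNbr D v).toFinset, ((outNbr D u).ncard : ℝ) < d ^ 2 / 2 := by
  classical
  set T : Finset V := (outNbr D v ∪ outNbr2 D v).toFinset with hT
  have hTcard : #T ≤ s := by
    have hsecond : (outNbr2 D v).ncard < (inNbr D v).ncard := not_le.1 hv
    have hunion := Set.ncard_union_le (outNbr D v) (outNbr2 D v)
    have hdegree := hD.ncard_outNbr_add_ncard_inNbr v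
    have hmax := hG.ncard_neighborSet_le v
    rw [hT, ← Set.ncard_eq_toFinset_card']
    omega
  obtain ⟨S, hTS, hS⟩ := exists_superset_card_eq hTcard hs
  refine lt_of_le_of_lt ?_ (hG.eIn_lt S hS)
  have hsub {u : V} (hu : u ∈ (outNbr D v).toFinset) : outNbr D u ∩ S = outNbr D u := by
    refine Set.inter_eq_left.2 fun w hw => hTS ?_
    simpa [T] using hD.1.outNbr_subset_of_mem_outNbr (Set.mem_toFinset.1 hu) hw
  have houtS : (outNbr D v).toFinset ⊆ S :=
    (Set.toFinset_subset_toFinset.2 Set.subset_union_left).trans hTS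
  calc ∑ u ∈ (outNbr D v).toFinset, ((outNbr D u).ncard : ℝ)
      = ∑ u ∈ (outNbr D v).toFinset, ((outNbr D u ∩ S).ncard : ℝ) :=
        sum_congr rfl fun u hu => by rw [hsub hu]
    _ ≤ ∑ u ∈ S, ((outNbr D u ∩ S).ncard : ℝ) :=
        sum_le_sum_of_subset_of_nonneg houtS fun _ _ _ => Nat.cast_nonneg _
    _ = eIn G S := mod_cast hD.sum_ncard_outNbr_inter S

lemma Orients.card_mul_le_sum_ncard_inNbr_mul_ncard_outNbr [Fintype V] {m : ℕ} {d : ℝ}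
    (hD : Orients D G) (hd : 0 ≤ d) (h4m : 4 * m ≤ Fintype.card V)
    (hm : ∀ S : Finset V, #S = m → d * m < eIn G S) :
    Fintype.card V * (d ^ 2 / 2) ≤
      ∑ u, ((inNbr D u).ncard * (outNbr D u).ncard : ℝ) := by
  classical
  set lowOut : Finset V := {v | (outNbr D v).ncard < d}
  set lowIn : Finset V := {v | (inNbr D v).ncard < d}
  have hcard : Fintype.card V ≤ 2 * #(lowOut ∪ lowIn)ᶜ := by
    have hout : #lowOut < m := hD.card_filter_ncard_outNbr_lt hm
    have hin : #lowIn < m := hD.flip.card_filter_ncard_outNbr_lt hm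
    have hunion := card_union_le lowOut lowIn
    rw [card_compl]
    omega
  calc Fintype.card V * (d ^ 2 / 2) ≤ (2 * #(lowOut ∪ lowIn)ᶜ : ℕ) * (d ^ 2 / 2) := by gcongr
    _ = #(lowOut ∪ lowIn)ᶜ • (d * d) := by push_cast [nsmul_eq_mul]; ring
    _ ≤ ∑ u ∈ (lowOut ∪ lowIn)ᶜ, ((inNbr D u).ncard * (outNbr D u).ncard : ℝ) := by
        refine card_nsmul_le_sum _ _ _ fun u hu => ?_
        simp only [lowOut, lowIn, mem_compl, mem_union, mem_filter, mem_univ, true_and, not_or,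
          not_lt] at hu
        exact mul_le_mul hu.2 hu.1 hd (Nat.cast_nonneg _)
    _ ≤ _ := sum_le_sum_of_subset_of_nonneg (subset_univ _) fun _ _ _ => by positivity

theorem IsSpread.exists_sullivanVertex [Fintype V] [Nonempty V] {m s : ℕ} {d : ℝ}
    (hG : IsSpread G m s d) (hd : 0 ≤ d) (h4m : 4 * m ≤ Fintype.card V)
    (hs : s ≤ Fintype.card V) (hD : Orients D G) : ∃ v, SullivanVertex D v := by
  classical
  by_contra! hno
  refine (hD.card_mul_le_sum_ncard_inNbr_mul_ncard_outNbr hd h4m hG.lt_eIn).not_gt ?_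
  calc ∑ u, ((inNbr D u).ncard * (outNbr D u).ncard : ℝ)
      = ∑ v, ∑ u ∈ (outNbr D v).toFinset, ((outNbr D u).ncard : ℝ) := by
        exact_mod_cast (sum_sum_outNbr fun u => (outNbr D u).ncard).symm
    _ < ∑ _v : V, d ^ 2 / 2 := sum_lt_sum_of_nonempty univ_nonempty fun v _ =>
        hD.sum_ncard_outNbr_lt_of_not_sullivanVertex hG hs (hno v)
    _ = Fintype.card V * (d ^ 2 / 2) := by simp

end Orientations

section BernoulliSets

open MeasureTheory ProbabilityTheory unitInterval
open scoped Finset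

variable {ι : Type*} (u : Set ι) (p : I)

lemma map_mem_setBernoulli (i : ι) :
    setBer(u, p).map (i ∈ ·) =
      toNNReal p • Measure.dirac (i ∈ u) + toNNReal (σ p) • Measure.dirac False := by
  rw [setBernoulli_eq_map, Measure.map_map (by fun_prop) (by fun_prop)]
  exact Measure.infinitePi_map_eval _ i

lemma iIndepFun_mem_setBernoulli : iIndepFun (fun (i : ι) (s : Set ι) => i ∈ s) setBer(u, p) := by
  rw [iIndepFun_iff_map_fun_eq_infinitePi_map (by fun_prop)]
  simp only [map_mem_setBernoulli]
  rw [setBernoulli_eq_map, Measure.map_map (by fun_prop) (by fun_prop)]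
  exact Measure.map_id

variable {u}

open scoped Classical in
lemma mgf_mem_setBernoulli {i : ι} (hi : i ∈ u) (t : ℝ) :
    mgf (fun s : Set ι => if i ∈ s then 1 else 0) setBer(u, p) t = p * Real.exp t + (1 - p) := by
  have hmap := integral_map (μ := setBer(u, p)) (φ := (i ∈ ·)) (by fun_prop)
    (f := fun q : Prop => Real.exp (t * if q then 1 else 0)) (by fun_prop)
  have hdirac (q : Prop) : Integrable (fun q : Prop => Real.exp (t * if q then 1 else 0))
      (Measure.dirac q) := integrable_dirac (by simp)
  rw [mgf, ← hmap, map_mem_setBernoulli, integral_add_measure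
    ((hdirac _).smul_measure_nnreal) ((hdirac _).smul_measure_nnreal),
    integral_smul_nnreal_measure, integral_smul_nnreal_measure, integral_dirac, integral_dirac]
  simp [hi, NNReal.smul_def]

lemma mgf_ncard_inter_setBernoulli {F : Finset ι} (hF : ↑F ⊆ u) (t : ℝ) :
    mgf (fun s => ((s ∩ F).ncard : ℝ)) setBer(u, p) t = (p * Real.exp t + (1 - p)) ^ #F := by
  classical
  have hsum : (fun s : Set ι => ((s ∩ F).ncard : ℝ)) =
      ∑ i ∈ F, fun s : Set ι => if i ∈ s then 1 else 0 := by
    ext s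
    rw [Finset.sum_apply, Finset.sum_boole, ← Set.ncard_coe_finset]
    congr 2
    ext i
    simp [and_comm]
  have hindep : iIndepFun (fun (i : ι) (s : Set ι) => if i ∈ s then (1 : ℝ) else 0) setBer(u, p) :=
    (iIndepFun_mem_setBernoulli u p).comp (fun _ q => if q then (1 : ℝ) else 0)
      fun _ => .of_discrete
  rw [hsum, hindep.mgf_sum fun i => (Measurable.of_discrete
    (f := fun q : Prop => if q then (1 : ℝ) else 0)).comp (measurable_set_mem i)]
  exact Finset.prod_eq_pow_card fun i hi => mgf_mem_setBernoulli p (hF hi) t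

-- The sign of `t` selects the tail: upper for `t > 0`, lower for `t < 0`.
lemma measureReal_ncard_inter_setBernoulli_le {F : Finset ι} (hF : ↑F ⊆ u) (t k : ℝ) :
    setBer(u, p).real {s | t * k ≤ t * (s ∩ F).ncard} ≤
      Real.exp (p * #F * (Real.exp t - 1) - t * k) := by
  have hbase : 0 < p * Real.exp t + (1 - p) := by
    have hconv := convex_Ioi (0 : ℝ) (Set.mem_Ioi.2 (Real.exp_pos t)) (Set.mem_Ioi.2 one_pos)
      p.2.1 (sub_nonneg.2 p.2.2) (add_sub_cancel _ _)
    simpa using hconv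
  have hmgf := mgf_ncard_inter_setBernoulli p hF t
  have hint : Integrable (fun s => Real.exp (1 * (t * (s ∩ F).ncard))) setBer(u, p) := by
    refine Integrable.of_integral_ne_zero ?_
    simpa only [one_mul, mgf] using hmgf.trans_ne (pow_pos hbase #F).ne'
  calc setBer(u, p).real {s | t * k ≤ t * (s ∩ F).ncard}
      ≤ Real.exp (-1 * (t * k)) * mgf (fun s => t * (s ∩ F).ncard) setBer(u, p) 1 :=
        measure_ge_le_exp_mul_mgf (t * k) zero_le_one hint
    _ = Real.exp (-(t * k)) * (p * Real.exp t + (1 - p)) ^ #F := by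
        rw [mgf_const_mul, mul_one, neg_one_mul, hmgf]
    _ ≤ Real.exp (-(t * k)) * Real.exp (p * (Real.exp t - 1)) ^ #F := by
        gcongr
        linarith [Real.add_one_le_exp (p * (Real.exp t - 1))]
    _ = Real.exp (p * #F * (Real.exp t - 1) - t * k) := by
        rw [← Real.exp_nat_mul, ← Real.exp_add]
        ring_nf

end BernoulliSets

section BinomialRandomGraph

open MeasureTheory ProbabilityTheory unitInterval
open scoped Finset SimpleGraph

variable {V : Type*} (p : I)

lemma gnpProb_eq_binomialRandom_real (n : ℕ) (P : SimpleGraph (Fin n) → Prop) :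
    gnpProb n p P = G(Fin n, p).real {G | P G} := by
  classical
  have : MeasurableSingletonClass (SimpleGraph (Fin n)) := ⟨fun G => by
    rw [← SimpleGraph.measurableEmbedding_edgeSet.measurableSet_image, Set.image_singleton]
    exact .of_discrete⟩
  rw [← Set.coe_toFinset {G | P G}, ← sum_measureReal_singleton, gnpProb]
  simp [Finset.sum_ite, measureReal_def]

section Countable

variable [Countable V]

lemma binomialRandom_real_ncard_edgeSet_inter_le {F : Finset (Sym2 V)} (hF : ∀ e ∈ F, ¬ e.IsDiag)
    (t k : ℝ) :
    G(V, p).real {G | t * k ≤ t * (G.edgeSet ∩ F).ncard} ≤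
      Real.exp (p * #F * (Real.exp t - 1) - t * k) := by
  refine le_trans ?_ (measureReal_ncard_inter_setBernoulli_le p (u := Sym2.diagSetᶜ) hF t k)
  rw [measureReal_def, SimpleGraph.binomialRandom_apply']
  exact measureReal_mono (Set.image_subset_iff.2 fun _ hG => hG)

lemma binomialRandom_real_eIn_le (S : Finset V) (t k : ℝ) :
    G(V, p).real {G | t * k ≤ t * eIn G S} ≤
      Real.exp (p * (#S).choose 2 * (Real.exp t - 1) - t * k) := by
  classical
  have heIn (G : SimpleGraph V) :
      eIn G S = (G.edgeSet ∩ (S.offDiag.image Sym2.mk.uncurry : Finset (Sym2 V))).ncard := by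
    rw [eIn]
    congr 1
    ext e
    induction e with | _ a b
    have := G.ne_of_adj (a := a) (b := b)
    simp
    grind
  simp only [heIn]
  rw [← Sym2.card_image_offDiag S]
  refine binomialRandom_real_ncard_edgeSet_inter_le p (fun e he => ?_) t k
  obtain ⟨⟨a, b⟩, hab, rfl⟩ := Finset.mem_image.1 he
  simpa using (Finset.mem_offDiag.1 hab).2.2

end Countable

variable [Fintype V]

lemma binomialRandom_real_ncard_neighborSet_le (v : V) {t : ℝ} (ht : 0 ≤ t) (k : ℝ) :
    G(V, p).real {G | t * k ≤ t * (G.neighborSet v).ncard} ≤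
      Real.exp (p * Fintype.card V * (Real.exp t - 1) - t * k) := by
  classical
  set F : Finset (Sym2 V) := (⊤ : SimpleGraph V).incidenceFinset v with hF
  have hdeg (G : SimpleGraph V) : (G.neighborSet v).ncard = (G.edgeSet ∩ F).ncard := by
    rw [← Nat.card_coe_set_eq, ← Nat.card_congr (G.incidenceSetEquivNeighborSet v),
      Nat.card_coe_set_eq]
    congr 1
    ext e
    simpa [hF, SimpleGraph.incidenceSet] using fun he _ => G.not_isDiag_of_mem_edgeSet he
  have hdiag : ∀ e ∈ F, ¬ e.IsDiag := fun e he =>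
    (⊤ : SimpleGraph V).not_isDiag_of_mem_edgeSet
      ((⊤ : SimpleGraph V).incidenceSet_subset v (by simpa [hF] using he))
  have hcard : #F ≤ Fintype.card V := by
    rw [hF, SimpleGraph.card_incidenceFinset_eq_degree]
    exact (SimpleGraph.degree_lt_card_verts _).le
  simp only [hdeg]
  refine (binomialRandom_real_ncard_edgeSet_inter_le p hdiag t k).trans ?_
  have := p.2.1
  have := sub_nonneg.2 (Real.one_le_exp ht)
  gcongr

lemma binomialRandom_real_exists_finset_le {s : ℕ} {P : Finset V → SimpleGraph V → Prop} {b : ℝ}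
    (hb : ∀ S : Finset V, #S = s → G(V, p).real {G | P S G} ≤ b) :
    G(V, p).real {G | ∃ S : Finset V, #S = s ∧ P S G} ≤ (Fintype.card V).choose s * b := by
  have hunion : {G | ∃ S : Finset V, #S = s ∧ P S G} =
      ⋃ S ∈ Finset.univ.powersetCard s, {G : SimpleGraph V | P S G} := by
    ext
    simp [Finset.mem_powersetCard]
  rw [hunion, ← nsmul_eq_mul, ← Finset.card_univ, ← Finset.card_powersetCard]
  refine (measureReal_biUnion_finset_le _ _).trans (Finset.sum_le_card_nsmul _ _ _ fun S hS => ?_)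
  exact hb S (Finset.mem_powersetCard.1 hS).2

lemma binomialRandom_real_exists_le_ncard_neighborSet_le (k : ℝ) :
    G(V, p).real {G | ∃ v, k ≤ (G.neighborSet v).ncard} ≤
      Real.exp (Real.log (Fintype.card V) + 2 * (p * Fintype.card V) - k) := by
  have hvertex (v : V) : G(V, p).real {G | k ≤ (G.neighborSet v).ncard} ≤
      Real.exp (2 * (p * Fintype.card V) - k) := by
    have hchernoff := binomialRandom_real_ncard_neighborSet_le p v zero_le_one k
    simp only [one_mul] at hchernoff
    have hμ : 0 ≤ (p * Fintype.card V : ℝ) := mul_nonneg p.2.1 (Nat.cast_nonneg _)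
    refine hchernoff.trans (Real.exp_le_exp.2 ?_)
    nlinarith [Real.exp_one_lt_three]
  calc G(V, p).real {G | ∃ v, k ≤ (G.neighborSet v).ncard}
      ≤ ∑ v, G(V, p).real {G | k ≤ (G.neighborSet v).ncard} := by
        rw [Set.ofPred_exists]
        exact measureReal_iUnion_fintype_le _
    _ ≤ Fintype.card V * Real.exp (2 * (p * Fintype.card V) - k) := by
        simpa using Finset.sum_le_card_nsmul Finset.univ _ _ fun v _ => hvertex v
    _ ≤ Real.exp (Real.log (Fintype.card V)) * Real.exp (2 * (p * Fintype.card V) - k) := by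
        gcongr
        exact Real.le_exp_log _
    _ = _ := by rw [← Real.exp_add, add_sub_assoc]

variable {p} in
lemma binomialRandom_real_exists_le_eIn_le (hp : 0 < (p : ℝ)) (s : ℕ) (k : ℝ) :
    G(V, p).real {G | ∃ S : Finset V, #S = s ∧ k ≤ eIn G S} ≤
      Real.exp (s * Real.log (Fintype.card V) + s ^ 2 + k * Real.log p) := by
  obtain hp1 | hp1 := (show (p : ℝ) ≤ 1 from p.2.2).eq_or_lt
  · refine measureReal_le_one.trans (Real.one_le_exp ?_)
    rw [hp1, Real.log_one, mul_zero, add_zero]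
    positivity
  have ht : 0 < -Real.log p := neg_pos.2 (Real.log_neg hp hp1)
  have hset (S : Finset V) (hS : #S = s) :
      G(V, p).real {G | k ≤ eIn G S} ≤ Real.exp (s ^ 2 + k * Real.log p) := by
    have hchernoff := binomialRandom_real_eIn_le p S (-Real.log p) k
    simp only [mul_le_mul_iff_of_pos_left ht] at hchernoff
    refine hchernoff.trans (Real.exp_le_exp.2 ?_)
    have hchoose : ((#S).choose 2 : ℝ) ≤ s ^ 2 := by
      rw [hS]
      exact_mod_cast Nat.choose_le_pow s 2
    have hpinv : p * (Real.exp (-Real.log p) - 1) ≤ 1 := by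
      rw [Real.exp_neg, Real.exp_log hp, mul_sub, mul_inv_cancel₀ hp.ne']
      linarith
    nlinarith [Nat.cast_nonneg (α := ℝ) ((#S).choose 2)]
  refine (binomialRandom_real_exists_finset_le p hset).trans ?_
  rw [add_assoc, Real.exp_add (s * _)]
  gcongr
  calc ((Fintype.card V).choose s : ℝ) ≤ Fintype.card V ^ s := mod_cast Nat.choose_le_pow _ s
    _ ≤ Real.exp (Real.log (Fintype.card V)) ^ s := by
        gcongr
        exact Real.le_exp_log _
    _ = Real.exp (s * Real.log (Fintype.card V)) := (Real.exp_nat_mul _ s).symm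

lemma binomialRandom_real_exists_eIn_le_le (m : ℕ) (k : ℝ) :
    G(V, p).real {G | ∃ S : Finset V, #S = m ∧ eIn G S ≤ k} ≤
      Real.exp (Fintype.card V - p * m.choose 2 / 2 + k) := by
  have hset (S : Finset V) (hS : #S = m) :
      G(V, p).real {G | eIn G S ≤ k} ≤ Real.exp (-(p * m.choose 2 / 2) + k) := by
    have hchernoff := binomialRandom_real_eIn_le p S (-1) k
    simp only [neg_one_mul, neg_le_neg_iff, hS, sub_neg_eq_add] at hchernoff
    refine hchernoff.trans (Real.exp_le_exp.2 ?_)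
    have hmean : 0 ≤ (p * m.choose 2 : ℝ) := mul_nonneg p.2.1 (Nat.cast_nonneg _)
    have hexp : Real.exp (-1) ≤ 1 / 2 := Real.exp_neg_one_lt_half.le
    nlinarith
  refine (binomialRandom_real_exists_finset_le p hset).trans ?_
  rw [sub_eq_add_neg, add_assoc, Real.exp_add (Fintype.card V : ℝ)]
  gcongr
  calc ((Fintype.card V).choose m : ℝ) ≤ 2 ^ Fintype.card V := mod_cast Nat.choose_le_two_pow _ m
    _ ≤ Real.exp 1 ^ Fintype.card V := by
        gcongr
        linarith [Real.add_one_le_exp 1]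
    _ = Real.exp (Fintype.card V) := by rw [← Real.exp_nat_mul, mul_one]

variable {p} in
lemma binomialRandom_real_not_isSpread_le (hp : 0 < (p : ℝ)) (m s : ℕ) (d : ℝ) :
    G(V, p).real {G | ¬ IsSpread G m s d} ≤
      Real.exp (Real.log (Fintype.card V) + 2 * (p * Fintype.card V) - s) +
      Real.exp (s * Real.log (Fintype.card V) + s ^ 2 + d ^ 2 / 2 * Real.log p) +
      Real.exp (Fintype.card V - p * m.choose 2 / 2 + d * m) := by
  have hsub : {G : SimpleGraph V | ¬ IsSpread G m s d} ⊆
      {G | ∃ v, (s : ℝ) ≤ (G.neighborSet v).ncard} ∪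
      {G | ∃ S : Finset V, #S = s ∧ d ^ 2 / 2 ≤ eIn G S} ∪
      {G | ∃ S : Finset V, #S = m ∧ eIn G S ≤ d * m} := by
    intro G hG
    by_contra! hnot
    simp only [Set.mem_union, Set.mem_ofPred_eq, not_or, not_exists, not_and, not_le] at hnot
    exact hG ⟨fun v => mod_cast (hnot.1.1 v).le, hnot.1.2, hnot.2⟩
  refine (measureReal_mono hsub).trans <| (measureReal_union_le _ _).trans <| add_le_add
    ((measureReal_union_le _ _).trans <| add_le_add ?_ ?_) ?_
  · exact binomialRandom_real_exists_le_ncard_neighborSet_le p s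
  · exact binomialRandom_real_exists_le_eIn_le hp s _
  · exact binomialRandom_real_exists_eIn_le_le p m _

end BinomialRandomGraph

section Concentration

open MeasureTheory ProbabilityTheory unitInterval
open scoped SimpleGraph

lemma div_six_add_one_le_div_four {n : ℕ} (hn : 21 ≤ n) : (n / 6 + 1 : ℝ) ≤ (n / 4 : ℕ) := by
  have hdiv : (n : ℝ) ≤ 4 * (n / 4 : ℕ) + 3 := by
    norm_cast
    omega
  have hn' : (21 : ℝ) ≤ n := mod_cast hn
  linarith

lemma sub_choose_two_add_le_neg {n : ℕ} {p : ℝ} (hp : p ≤ 1) (hμ : 576 ≤ p * n) :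
    n - p * (n / 4).choose 2 / 2 + p * n / 48 * (n / 4 : ℕ) ≤ -(p * n) := by
  have hμn : p * n ≤ n := mul_le_of_le_one_left n.cast_nonneg hp
  have hp0 : 0 < p := pos_of_mul_pos_left (by linarith) n.cast_nonneg
  have hquarter : (n / 6 + 1 : ℝ) ≤ (n / 4 : ℕ) := by
    refine div_six_add_one_le_div_four ?_
    rify
    linarith
  have hchoose : ((n / 4 : ℕ) * n / 12 : ℝ) ≤ (n / 4).choose 2 := by
    rw [Nat.cast_choose_two]
    nlinarith
  calc n - p * (n / 4).choose 2 / 2 + p * n / 48 * (n / 4 : ℕ)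
      ≤ n - p * ((n / 4 : ℕ) * n / 12) / 2 + p * n / 48 * (n / 4 : ℕ) := by gcongr
    _ = n - p * n / 48 * (n / 4 : ℕ) := by ring
    _ ≤ n - p * n / 48 * (n / 6) := by
        gcongr
        linarith
    _ ≤ -(p * n) := by nlinarith

variable {V : Type*} [Fintype V] {p : I} {a : ℝ}

-- `9216 = 4 * 48 ^ 2`: for `μ = p * card V` and `d = μ / 48`, the term `(d ^ 2 / 2) * log p` is at
-- most `-2 * ((4 + a) * μ) ^ 2`, which absorbs both the choice of the `s`-set and its pairs.
lemma binomialRandom_real_not_isSpread_le_three_mul_exp {s : ℕ}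
    (hμ : 576 ≤ (p * Fintype.card V : ℝ))
    (ha : Real.log (Fintype.card V) ≤ a * (p * Fintype.card V))
    (hp : Real.log p ≤ -9216 * (4 + a) ^ 2) (hs : (3 + a) * (p * Fintype.card V) ≤ s)
    (hs' : s ≤ (4 + a) * (p * Fintype.card V)) :
    G(V, p).real {G | ¬ IsSpread G (Fintype.card V / 4) s (p * Fintype.card V / 48)} ≤
      3 * Real.exp (-(p * Fintype.card V)) := by
  have hp0 : 0 < (p : ℝ) := pos_of_mul_pos_left (by linarith) (Nat.cast_nonneg (Fintype.card V))
  refine (binomialRandom_real_not_isSpread_le hp0 _ s _).trans ?_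
  set N := Fintype.card V
  set μ : ℝ := p * N
  have hlog : 0 ≤ Real.log N := Real.log_natCast_nonneg N
  have ha0 : 0 ≤ a := nonneg_of_mul_nonneg_left (hlog.trans ha) (by linarith)
  have hdegree : Real.log N + 2 * μ - s ≤ -μ := by linarith
  have hsparse : s * Real.log N + s ^ 2 + (μ / 48) ^ 2 / 2 * Real.log p ≤ -μ := by
    calc s * Real.log N + s ^ 2 + (μ / 48) ^ 2 / 2 * Real.log p
        ≤ (4 + a) * μ * (a * μ) + ((4 + a) * μ) ^ 2 +
            (μ / 48) ^ 2 / 2 * (-9216 * (4 + a) ^ 2) := by gcongr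
      _ = -(4 * (4 + a) * μ * μ) := by ring
      _ ≤ -μ := by nlinarith
  have hdense : (N : ℝ) - p * (N / 4).choose 2 / 2 + μ / 48 * (N / 4 : ℕ) ≤ -μ :=
    sub_choose_two_add_le_neg p.2.2 hμ
  calc _ ≤ Real.exp (-μ) + Real.exp (-μ) + Real.exp (-μ) := by gcongr
    _ = 3 * Real.exp (-μ) := by ring

theorem one_sub_le_binomialRandom_real_exists_sullivanVertex
    (hμ : 576 ≤ (p * Fintype.card V : ℝ))
    (ha : Real.log (Fintype.card V) ≤ a * (p * Fintype.card V))
    (hp : Real.log p ≤ -9216 * (4 + a) ^ 2) :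
    1 - 3 * Real.exp (-(p * Fintype.card V)) ≤
      G(V, p).real {G | ∀ D, Orients D G → ∃ v, SullivanVertex D v} := by
  set μ : ℝ := p * Fintype.card V with hμdef
  have hp0 : 0 < (p : ℝ) := pos_of_mul_pos_left (by linarith) (Nat.cast_nonneg (Fintype.card V))
  have hV : Nonempty V := by
    by_contra! hempty
    norm_num [hμdef] at hμ
  have ha0 : 0 ≤ a := nonneg_of_mul_nonneg_left ((Real.log_natCast_nonneg _).trans ha)
    (by linarith)
  set s := ⌈(3 + a) * μ⌉₊
  have hs : s ≤ (4 + a) * μ := by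
    linarith [Nat.ceil_lt_add_one (show 0 ≤ (3 + a) * μ by positivity)]
  have hsV : s ≤ Fintype.card V := by
    have hpinv : 4 + a ≤ (p : ℝ)⁻¹ := by nlinarith [Real.one_sub_inv_le_log_of_pos hp0]
    rify
    calc (s : ℝ) ≤ (4 + a) * p * Fintype.card V := by rwa [mul_assoc]
      _ ≤ 1 * Fintype.card V := by
          gcongr
          exact (le_mul_inv_iff₀ hp0).1 (by rwa [one_mul])
      _ = Fintype.card V := one_mul _
  have hspread := binomialRandom_real_not_isSpread_le_three_mul_exp hμ ha hp (Nat.le_ceil _) hs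
  have hcover : Set.univ ⊆ {G : SimpleGraph V | ∀ D, Orients D G → ∃ v, SullivanVertex D v} ∪
      {G | ¬ IsSpread G (Fintype.card V / 4) s (μ / 48)} := by
    intro G _
    by_cases hG : IsSpread G (Fintype.card V / 4) s (μ / 48)
    · exact .inl fun D => hG.exists_sullivanVertex (by positivity) (by omega) hsV
    · exact .inr hG
  have hunion := (measureReal_mono (μ := G(V, p)) hcover).trans (measureReal_union_le _ _)
  rw [probReal_univ] at hunion
  linarith

end Concentration

section Threshold

open unitInterval
open scoped Topology

theorem stmt_12_general {c : ℝ} (hc : 0 < c) :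
    ∃ ε > 0, ∀ p : ℕ → ℝ, (∀ n, p n ∈ Set.Icc (0 : ℝ) 1) →
      (∀ᶠ n : ℕ in atTop, c * Real.log n / n ≤ p n) → (∀ᶠ n in atTop, p n ≤ ε) →
      Tendsto (fun n => gnpProb n (p n) (fun G =>
        ∀ D : Fin n → Fin n → Prop, Orients D G → ∃ v, SullivanVertex D v))
        atTop (nhds 1) := by
  refine ⟨Real.exp (-9216 * (4 + c⁻¹) ^ 2), Real.exp_pos _, fun p hp hlb hub => ?_⟩
  have hprob (n : ℕ) := gnpProb_eq_binomialRandom_real (⟨p n, hp n⟩ : I) n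
  have hmean : ∀ᶠ n : ℕ in atTop, c * Real.log n ≤ p n * n := by
    filter_upwards [hlb, eventually_gt_atTop 0] with n hn hn0
    rwa [div_le_iff₀ (by positivity)] at hn
  have hlog : Tendsto (fun n : ℕ => c * Real.log n) atTop atTop :=
    (Real.tendsto_log_atTop.comp tendsto_natCast_atTop_atTop).const_mul_atTop hc
  have hatTop : Tendsto (fun n : ℕ => p n * n) atTop atTop := tendsto_atTop_mono' _ hmean hlog
  have hlim : Tendsto (fun n : ℕ => 1 - 3 * Real.exp (-(p n * n))) atTop (𝓝 1) := by
    simpa using ((Real.tendsto_exp_neg_atTop_nhds_zero.comp hatTop).const_mul 3).const_sub 1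
  refine tendsto_of_tendsto_of_tendsto_of_le_of_le' hlim tendsto_const_nhds ?_ ?_
  · filter_upwards [hmean, hub, hatTop.eventually_ge_atTop 576] with n hlogn hsmall hlarge
    have hpos : 0 < p n := pos_of_mul_pos_left (by linarith) n.cast_nonneg
    rw [hprob]
    simpa using one_sub_le_binomialRandom_real_exists_sullivanVertex
      (V := Fin n) (p := ⟨p n, hp n⟩) (a := c⁻¹) (by simpa using hlarge)
      (by simpa [le_inv_mul_iff₀ hc] using hlogn) ((Real.log_le_iff_le_exp hpos).2 hsmall)
  · exact .of_forall fun n => (hprob n _).trans_le MeasureTheory.measureReal_le_one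

end Threshold

/-- if `p = p(n) ∈ [0,1]` satisfies `3 log n/(4n) ≤ p(n)` for large `n`
and `p(n) → 0`, then a.a.s. every orientation of `G(n,p)` contains a Sullivan vertex. -/
theorem stmt_12 (p : ℕ → ℝ) (hp : ∀ n, p n ∈ Set.Icc (0 : ℝ) 1)
    (hlb : ∀ᶠ n : ℕ in atTop, 3 * Real.log n / (4 * n) ≤ p n)
    (h0 : Tendsto p atTop (nhds 0)) :
    Tendsto (fun n => gnpProb n (p n) (fun G =>
        ∀ D : Fin n → Fin n → Prop, Orients D G → ∃ v, SullivanVertex D v))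
      atTop (nhds 1) := by
  obtain ⟨ε, hε, hsullivan⟩ := stmt_12_general (c := 3 / 4) (by norm_num)
  refine hsullivan p hp (hlb.mono fun n hn => ?_) (h0.eventually_le_const hε)
  rwa [div_mul_eq_mul_div, div_div]
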